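/- For every k > 0 and every integer T with T < k/γ̂, there exists a starting point x ∈ Δ_G such that the Gibbs sampler on Δ_G started from X_0 = x satisfies ‖L(X_T) − U_G‖_TV ≥ (1/2)·e^{−k} − 4·n^{−1/3}. -/

import Mathlib

open MeasureTheory

noncomputable section

/-- Uniform probability measure on a finset. -/
def unifOn {α : Type*} [MeasurableSpace α] (s : Finset α) : Measure α :=
  (s.card : ENNReal)⁻¹ • ∑ a ∈ s, Measure.dirac a

/-- Total variation distance between two measures. -/
def tvDist {α : Type*} [MeasurableSpace α] (μ ν : Measure α) : ℝ :=
  ⨆ A : {A : Set α // MeasurableSet A}, ((μ A).toReal - (ν A).toReal)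

variable (G : Type*) [Group G] [Fintype G] [DecidableEq G] [MeasurableSpace G]
  [DiscreteMeasurableSpace G]

/-- The simplex of probability vectors indexed by `G`. -/
def simplexG : Set (G → ℝ) := {x | (∀ g, 0 ≤ x g) ∧ ∑ g, x g = 1}

/-- The uniform (normalized `(n-1)`-dimensional Hausdorff) measure on the simplex. -/
def UG : Measure (G → ℝ) :=
  (μH[(Fintype.card G : ℝ) - 1] (simplexG G))⁻¹ •
    (μH[(Fintype.card G : ℝ) - 1]).restrict (simplexG G)

/-- One step of the Gibbs sampler on the simplex from update datum `(g, r, λ)`. -/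
def gibbsStepG (x : G → ℝ) (u : G × G × ℝ) : G → ℝ := fun h =>
  if h = u.1 then u.2.2 * (x u.1 + x (u.1 * u.2.1))
  else if h = u.1 * u.2.1 then (1 - u.2.2) * (x u.1 + x (u.1 * u.2.1))
  else x h

/-- Law of the random update datum: `g` uniform on `G`, `r` uniform on `R`,
`λ` uniform on `[0,1]`. -/
def driveG (R : Finset G) : Measure (G × G × ℝ) :=
  (unifOn (Finset.univ : Finset G)).prod
    ((unifOn R).prod ((volume : Measure ℝ).restrict (Set.Icc 0 1)))

/-- Law of the Gibbs sampler after `T` steps started at `x`. -/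
def lawG (R : Finset G) (x : G → ℝ) (T : ℕ) : Measure (G → ℝ) :=
  Measure.map (fun ω : Fin T → G × G × ℝ => (List.ofFn ω).foldl (gibbsStepG G) x)
    (Measure.pi fun _ => driveG G R)

/-- The transition matrix of the slowed simple random walk on `G`. -/
def KhatM (R : Finset G) : G → G → ℝ := fun z w =>
  if z = w then 1 - 2 / (Fintype.card G : ℝ)
  else if z⁻¹ * w ∈ R then 2 / ((Fintype.card G : ℝ) * R.card) else 0

/-- The spectral gap `γ̂ = 1 - λ̂₂` of `K̂`, with the second-largest eigenvalue
expressed by the variational (Courant–Fischer) characterization. -/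
def gapHat (R : Finset G) : ℝ :=
  1 - sSup {lam : ℝ | ∃ v : G → ℝ, ∑ g, v g = 0 ∧ ∑ g, (v g) ^ 2 = 1 ∧
    lam = ∑ g, ∑ h, v g * KhatM G R g h * v h}

/-!
One step of the sampler splits the sum of the values at `g` and `gr` uniformly, so in mean it
averages them, and the mean of `f ⬝ᵥ X` evolves by applying `(I + K̂) / 2` to `f`. Take for `f` an
eigenfunction of `K̂` with eigenvalue `1 - γ̂`, scaled so that `max |f| = f z = 1`: from the vertex
at `z` the mean of `f ⬝ᵥ X_T` is `(1 - γ̂ / 2) ^ T`, which is at least `exp (-γ̂ T)` if `γ̂ ≤ 1`;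
since `γ̂ ≤ 4 / n`, only small groups are excluded, for which the bound is trivial.

Under the uniform measure, `f ⬝ᵥ x` has second moment at most `1 / (n + 1)`. The linear shear
`x z ↦ x z - x w`, `x w ↦ 2 x w` maps the half `{x w ≤ x z}` of the simplex onto the simplex with
constant Jacobian, hence `E (x z - x w)² = (E x_z² + E x_w²) / 2`; no explicit density is needed.
By Chebyshev, the event `f ⬝ᵥ x > n ^ (-1/3)` separates the two laws.
-/

section Shear

variable {ι : Type*} [DecidableEq ι]

/-- The linear map fixing every coordinate of `x` except `x z ↦ x z - x w` and `x w ↦ 2 * x w`.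
It preserves the sum of the coordinates, and it carries the half `{x | x w ≤ x z}` of the simplex
onto the whole simplex. -/
def shear (z w : ι) : (ι → ℝ) →ₗ[ℝ] ι → ℝ :=
  LinearMap.transvection (LinearMap.proj w) (Pi.single w 1 - Pi.single z 1)

variable {z w : ι}

lemma shear_apply (x : ι → ℝ) (i : ι) :
    shear z w x i = x i + x w * ((Pi.single w 1 - Pi.single z 1 : ι → ℝ) i) := by
  simp [shear, LinearMap.transvection]

lemma shear_apply_left (hzw : z ≠ w) (x : ι → ℝ) : shear z w x z = x z - x w := by
  simp [shear_apply, hzw, sub_eq_add_neg]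

lemma shear_apply_right (hzw : z ≠ w) (x : ι → ℝ) : shear z w x w = 2 * x w := by
  simp [shear_apply, hzw.symm, two_mul]

lemma shear_apply_of_ne {i : ι} (hz : i ≠ z) (hw : i ≠ w) (x : ι → ℝ) : shear z w x i = x i := by
  simp [shear_apply, hz, hw]

lemma continuous_shear : Continuous (shear z w) := by
  simp only [continuous_pi_iff, shear_apply]
  fun_prop

end Shear

section Simplex

variable {ι : Type*} [Fintype ι]

lemma measurableSet_simplexG : MeasurableSet (simplexG ι) :=
  (isClosed_stdSimplex ℝ ι).measurableSet

lemma abs_dotProduct_le_norm {x : ι → ℝ} (hx : x ∈ simplexG ι) (f : ι → ℝ) : |f ⬝ᵥ x| ≤ ‖f‖ :=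
  calc |∑ i, f i * x i| ≤ ∑ i, |f i * x i| := Finset.abs_sum_le_sum_abs _ _
    _ ≤ ∑ i, ‖f‖ * x i := by
      refine Finset.sum_le_sum fun i _ => ?_
      rw [abs_mul, abs_of_nonneg (hx.1 i)]
      exact mul_le_mul_of_nonneg_right (norm_le_pi_norm f i) (hx.1 i)
    _ = ‖f‖ := by rw [← Finset.mul_sum, hx.2, mul_one]

variable (ι) in
/-- The direction of the affine hyperplane spanned by the simplex. -/
def sumZero : Submodule ℝ (ι → ℝ) := LinearMap.ker (∑ i, LinearMap.proj i : (ι → ℝ) →ₗ[ℝ] ℝ)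

lemma mem_sumZero {v : ι → ℝ} : v ∈ sumZero ι ↔ ∑ i, v i = 0 := by
  simp [sumZero]

lemma finrank_sumZero [Nonempty ι] :
    (Module.finrank ℝ (sumZero ι) : ℝ) = Fintype.card ι - 1 := by
  classical
  have hrange : LinearMap.range (∑ i, LinearMap.proj i : (ι → ℝ) →ₗ[ℝ] ℝ) = ⊤ :=
    LinearMap.range_eq_top.2 fun c =>
      ⟨Pi.single (Classical.arbitrary ι) c, by simp⟩
  have hdim := LinearMap.finrank_range_add_finrank_ker (∑ i, LinearMap.proj i : (ι → ℝ) →ₗ[ℝ] ℝ)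
  rw [hrange, finrank_top, Module.finrank_self, Module.finrank_fintype_fun_eq_card] at hdim
  rw [← hdim, sumZero]
  push_cast
  ring

variable (ι) in
/-- Hausdorff measure on the affine hyperplane spanned by the simplex, as a measure on the ambient
space. -/
def sumOneMeasure : Measure (ι → ℝ) :=
  (μH[(Fintype.card ι : ℝ) - 1]).restrict {x | ∑ i, x i = 1}

lemma sumOneMeasure_eq_map {u : ι → ℝ} (hu : ∑ i, u i = 1) :
    sumOneMeasure ι =
      Measure.map (fun v : sumZero ι => (v : ι → ℝ) + u) μH[Module.finrank ℝ (sumZero ι)] := by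
  have : Nonempty ι := by
    by_contra h
    simp [not_nonempty_iff.1 h] at hu
  have hisom : Isometry fun v : sumZero ι => (v : ι → ℝ) + u := fun a b => by
    simp [Subtype.edist_eq]
  have hrange : Set.range (fun v : sumZero ι => (v : ι → ℝ) + u) = {x | ∑ i, x i = 1} := by
    ext x
    constructor
    · rintro ⟨v, rfl⟩
      simp [Finset.sum_add_distrib, mem_sumZero.1 v.2, hu]
    · intro hx
      exact ⟨⟨x - u, by simp [mem_sumZero, Finset.sum_sub_distrib, hu, hx.out]⟩, by simp⟩
  rw [hisom.map_hausdorffMeasure (Or.inl (Nat.cast_nonneg _)), hrange, finrank_sumZero,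
    sumOneMeasure]

lemma UG_eq_smul_restrict_sumOneMeasure :
    UG ι = (μH[(Fintype.card ι : ℝ) - 1] (simplexG ι))⁻¹ •
      (sumOneMeasure ι).restrict (simplexG ι) := by
  rw [sumOneMeasure, Measure.restrict_restrict measurableSet_simplexG,
    Set.inter_eq_left.2 fun x hx => hx.2, UG]

instance : IsZeroOrProbabilityMeasure (UG ι) :=
  inferInstanceAs (IsZeroOrProbabilityMeasure (ProbabilityTheory.cond _ (simplexG ι)))

lemma ae_mem_simplexG_UG : ∀ᵐ x ∂UG ι, x ∈ simplexG ι :=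
  Measure.ae_smul_measure (ae_restrict_mem measurableSet_simplexG) _

lemma integrable_of_continuous_of_ae_mem_isCompact {X : Type*} [TopologicalSpace X] [T2Space X]
    [MeasurableSpace X] [OpensMeasurableSpace X] {μ : Measure X} [IsFiniteMeasure μ] {s : Set X}
    (hs : IsCompact s) (hmem : ∀ᵐ x ∂μ, x ∈ s) {φ : X → ℝ} (hφ : Continuous φ) :
    Integrable φ μ := by
  have hint := hφ.continuousOn.integrableOn_compact (μ := μ) hs
  rwa [IntegrableOn, Measure.restrict_eq_self_of_ae_mem hmem] at hint

lemma integrable_UG {φ : (ι → ℝ) → ℝ} (hφ : Continuous φ) : Integrable φ (UG ι) :=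
  integrable_of_continuous_of_ae_mem_isCompact (isCompact_stdSimplex ℝ ι) ae_mem_simplexG_UG hφ

section ShearSimplex

variable [DecidableEq ι] {z w : ι}

lemma sum_shear (x : ι → ℝ) : ∑ i, shear z w x i = ∑ i, x i := by
  simp [shear_apply, Finset.sum_add_distrib, ← Finset.mul_sum]

lemma shear_mem_simplexG_iff (hzw : z ≠ w) (x : ι → ℝ) :
    shear z w x ∈ simplexG ι ↔ x w ≤ x z ∧ x ∈ simplexG ι := by
  constructor
  · rintro ⟨hnonneg, hsum⟩
    have hz := shear_apply_left hzw x ▸ hnonneg z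
    have hw := shear_apply_right hzw x ▸ hnonneg w
    refine ⟨by linarith, fun i => ?_, sum_shear x ▸ hsum⟩
    rcases eq_or_ne i z with rfl | hiz
    · linarith
    rcases eq_or_ne i w with rfl | hiw
    · linarith
    · exact shear_apply_of_ne hiz hiw x ▸ hnonneg i
  · rintro ⟨hle, hnonneg, hsum⟩
    refine ⟨fun i => ?_, (sum_shear x).trans hsum⟩
    rcases eq_or_ne i z with rfl | hiz
    · rw [shear_apply_left hzw]
      linarith
    rcases eq_or_ne i w with rfl | hiw
    · rw [shear_apply_right hzw]
      linarith [hnonneg i]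
    · exact (shear_apply_of_ne hiz hiw x).symm ▸ hnonneg i

lemma map_shear_sumOneMeasure (hzw : z ≠ w) :
    (sumOneMeasure ι).map (shear z w) = (2 : ENNReal)⁻¹ • sumOneMeasure ι := by
  let shear₀ : sumZero ι →ₗ[ℝ] sumZero ι :=
    LinearMap.transvection (LinearMap.proj w ∘ₗ (sumZero ι).subtype)
      ⟨Pi.single w 1 - Pi.single z 1, by simp [mem_sumZero]⟩
  have hdet : LinearMap.det shear₀ = 2 := by
    rw [LinearMap.transvection.det]
    simp [hzw.symm, one_add_one_eq_two]
  -- The base point `Pi.single z 1` vanishes at `w`, so it is fixed by the shear.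
  have hcomm : shear z w ∘ (fun v : sumZero ι => (v : ι → ℝ) + Pi.single z 1) =
      (fun v : sumZero ι => (v : ι → ℝ) + Pi.single z 1) ∘ shear₀ := by
    have hcoe (v : sumZero ι) : (shear₀ v : ι → ℝ) = shear z w v := by
      simp [shear₀, shear, LinearMap.transvection]
    ext v i
    simp only [Function.comp_apply, Pi.add_apply, hcoe, shear_apply,
      Pi.single_eq_of_ne hzw.symm, add_zero]
    ring
  have hmeas : Measurable fun v : sumZero ι => (v : ι → ℝ) + Pi.single z 1 := by fun_prop
  have hmeas₀ : Measurable shear₀ :=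
    (LinearMap.continuous_of_finiteDimensional _).measurable
  rw [sumOneMeasure_eq_map (u := Pi.single z 1) (by simp),
    Measure.map_map continuous_shear.measurable hmeas, hcomm, ← Measure.map_map hmeas hmeas₀,
    Measure.map_linearMap_addHaar_eq_smul_addHaar _ (by simp [hdet]), hdet, Measure.map_smul,
    abs_of_pos (by norm_num), ENNReal.ofReal_inv_of_pos two_pos, ENNReal.ofReal_ofNat]

lemma map_shear_UG (hzw : z ≠ w) :
    ((UG ι).restrict {x | x w ≤ x z}).map (shear z w) = (2 : ENNReal)⁻¹ • UG ι := by
  have hpre : {x | x w ≤ x z} ∩ simplexG ι = shear z w ⁻¹' simplexG ι :=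
    Set.ext fun x => (shear_mem_simplexG_iff hzw x).symm
  have hhalf : MeasurableSet {x : ι → ℝ | x w ≤ x z} := by measurability
  rw [UG_eq_smul_restrict_sumOneMeasure, Measure.restrict_smul, Measure.restrict_restrict hhalf,
    hpre, Measure.map_smul, ← Measure.restrict_map continuous_shear.measurable
    measurableSet_simplexG, map_shear_sumOneMeasure hzw, Measure.restrict_smul, smul_comm]

end ShearSimplex

lemma setIntegral_sq_sub_UG {z w : ι} (hzw : z ≠ w) :
    ∫ x in {x | x w ≤ x z}, (x z - x w) ^ 2 ∂UG ι = (∫ x, x z ^ 2 ∂UG ι) / 2 := by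
  classical
  calc ∫ x in {x | x w ≤ x z}, (x z - x w) ^ 2 ∂UG ι
      = ∫ x in {x | x w ≤ x z}, (shear z w x z) ^ 2 ∂UG ι := by simp only [shear_apply_left hzw]
    _ = ∫ x, x z ^ 2 ∂((UG ι).restrict {x | x w ≤ x z}).map (shear z w) :=
      (integral_map (f := fun x : ι → ℝ => x z ^ 2) continuous_shear.aemeasurable
        (by fun_prop : Continuous _).aestronglyMeasurable).symm
    _ = (∫ x, x z ^ 2 ∂UG ι) / 2 := by
      rw [map_shear_UG hzw, integral_smul_measure, ENNReal.toReal_inv, ENNReal.toReal_ofNat,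
        smul_eq_mul, inv_mul_eq_div]

lemma integral_sq_sub_UG {z w : ι} (hzw : z ≠ w) :
    ∫ x, (x z - x w) ^ 2 ∂UG ι = (∫ x, x z ^ 2 ∂UG ι + ∫ x, x w ^ 2 ∂UG ι) / 2 := by
  classical
  have hcompl : ∫ x in {x | x w ≤ x z}ᶜ, (x z - x w) ^ 2 ∂UG ι =
      ∫ x in {x | x z ≤ x w}, (x w - x z) ^ 2 ∂UG ι := by
    rw [← integral_indicator (by measurability), ← integral_indicator (by measurability)]
    congr 1
    ext x
    rcases lt_trichotomy (x z) (x w) with h | h | h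
    · simp [h.le, h, sub_sq_comm (x z)]
    · simp [h]
    · simp [h.le, h]
  rw [← integral_add_compl (s := {x | x w ≤ x z}) (by measurability)
    (integrable_UG (by fun_prop)), hcompl, setIntegral_sq_sub_UG hzw,
    setIntegral_sq_sub_UG hzw.symm, add_div]

lemma sq_dotProduct_eq (f x : ι → ℝ) :
    (f ⬝ᵥ x) ^ 2 = (∑ i, f i) * ∑ i, f i * x i ^ 2 -
      (∑ z, ∑ w, f z * f w * (x z - x w) ^ 2) / 2 := by
  have hexpand : ∑ z, ∑ w, f z * f w * (x z - x w) ^ 2 =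
      ∑ z, ∑ w, f z * (f w * x w ^ 2) + ∑ z, ∑ w, f z * x z ^ 2 * f w -
        2 * ∑ z, ∑ w, f z * x z * (f w * x w) := by
    simp only [Finset.mul_sum, ← Finset.sum_add_distrib, ← Finset.sum_sub_distrib]
    exact Finset.sum_congr rfl fun z _ => Finset.sum_congr rfl fun w _ => by ring
  rw [hexpand]
  simp only [← Finset.sum_mul_sum, dotProduct]
  ring

lemma integral_sq_dotProduct_UG (f : ι → ℝ) :
    ∫ x, (f ⬝ᵥ x) ^ 2 ∂UG ι = ((∑ i, f i) * ∑ i, f i * ∫ x, x i ^ 2 ∂UG ι) / 2 +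
      (∑ i, f i ^ 2 * ∫ x, x i ^ 2 ∂UG ι) / 2 := by
  classical
  set b : ι → ℝ := fun i => ∫ x, x i ^ 2 ∂UG ι
  have hsub (z w : ι) : ∫ x, (x z - x w) ^ 2 ∂UG ι =
      (b z + b w) / 2 - if z = w then b z else 0 := by
    split_ifs with hzw
    · simp [hzw]
    · rw [integral_sq_sub_UG hzw, sub_zero]
  have hsum : ∑ z, ∑ w, f z * f w * ((b z + b w) / 2 - if z = w then b z else 0) =
      (∑ i, f i) * (∑ i, f i * b i) - ∑ i, f i ^ 2 * b i := by
    calc _ = ∑ z, ∑ w, (f z * b z * f w / 2 + f z * (f w * b w) / 2) -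
          ∑ z, ∑ w, if z = w then f z * f w * b z else 0 := by
          simp only [← Finset.sum_sub_distrib]
          refine Finset.sum_congr rfl fun z _ => Finset.sum_congr rfl fun w _ => ?_
          split_ifs <;> ring
      _ = _ := by
        simp only [Finset.sum_add_distrib, ← Finset.sum_div, ← Finset.sum_mul_sum,
          Finset.sum_ite_eq, Finset.mem_univ, if_true, ← sq]
        ring
  simp_rw [sq_dotProduct_eq]
  have hdiag : ∫ x, ∑ i, f i * x i ^ 2 ∂UG ι = ∑ i, f i * b i := by
    rw [integral_finsetSum _ fun i _ => integrable_UG (by fun_prop)]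
    simp only [integral_const_mul, b]
  have hpairs : ∫ x, ∑ z, ∑ w, f z * f w * (x z - x w) ^ 2 ∂UG ι =
      ∑ z, ∑ w, f z * f w * ((b z + b w) / 2 - if z = w then b z else 0) := by
    rw [integral_finsetSum _ fun z _ => integrable_UG (by fun_prop)]
    refine Finset.sum_congr rfl fun z _ => ?_
    rw [integral_finsetSum _ fun w _ => integrable_UG (by fun_prop)]
    simp only [integral_const_mul, hsub]
  rw [integral_sub (integrable_UG (by fun_prop)) (integrable_UG (by fun_prop)),
    integral_const_mul, integral_div, hdiag, hpairs, hsum]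
  ring

lemma integral_sq_dotProduct_UG_le {f : ι → ℝ} (hf : ∑ i, f i = 0) :
    (Fintype.card ι + 1) * ∫ x, (f ⬝ᵥ x) ^ 2 ∂UG ι ≤ ‖f‖ ^ 2 := by
  have hmass : (Fintype.card ι + 1) * (∑ i, ∫ x : ι → ℝ, x i ^ 2 ∂UG ι) / 2 ≤ 1 :=
    calc (Fintype.card ι + 1) * (∑ i, ∫ x : ι → ℝ, x i ^ 2 ∂UG ι) / 2
        = ∫ x, ((1 : ι → ℝ) ⬝ᵥ x) ^ 2 ∂UG ι := by
          rw [integral_sq_dotProduct_UG]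
          simp only [Pi.one_apply, Finset.sum_const, Finset.card_univ, nsmul_eq_mul, mul_one,
            one_mul, one_pow]
          ring
      _ = ∫ _, 1 ∂UG ι := integral_congr_ae <| ae_mem_simplexG_UG.mono fun x hx => by
          simp [dotProduct, hx.2]
      _ ≤ 1 := by simp [measureReal_le_one]
  have hdiag : ∑ i, f i ^ 2 * ∫ x, x i ^ 2 ∂UG ι ≤ ‖f‖ ^ 2 * ∑ i, ∫ x, x i ^ 2 ∂UG ι := by
    rw [Finset.mul_sum]
    refine Finset.sum_le_sum fun i _ =>
      mul_le_mul_of_nonneg_right ?_ (integral_nonneg fun x => sq_nonneg (x i))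
    exact sq_le_sq' (neg_le_of_abs_le (norm_le_pi_norm f i)) (le_of_abs_le (norm_le_pi_norm f i))
  rw [integral_sq_dotProduct_UG, hf, zero_mul, zero_div, zero_add]
  calc (Fintype.card ι + 1) * ((∑ i, f i ^ 2 * ∫ x, x i ^ 2 ∂UG ι) / 2)
      ≤ (Fintype.card ι + 1) * ((‖f‖ ^ 2 * ∑ i, ∫ x, x i ^ 2 ∂UG ι) / 2) := by gcongr
    _ = ‖f‖ ^ 2 * ((Fintype.card ι + 1) * (∑ i, ∫ x, x i ^ 2 ∂UG ι) / 2) := by ring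
    _ ≤ ‖f‖ ^ 2 := mul_le_of_le_one_right (sq_nonneg _) hmass

lemma measureReal_UG_dotProduct_gt_le {f : ι → ℝ} (hf : ∑ i, f i = 0) {a : ℝ} (ha : 0 < a) :
    (UG ι).real {x | a < f ⬝ᵥ x} ≤ ‖f‖ ^ 2 / (a ^ 2 * (Fintype.card ι + 1)) := by
  have hmono : (UG ι).real {x | a < f ⬝ᵥ x} ≤ (UG ι).real {x | a ^ 2 ≤ (f ⬝ᵥ x) ^ 2} :=
    measureReal_mono fun x hx => pow_le_pow_left₀ ha.le hx.out.le 2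
  rw [le_div_iff₀ (by positivity)]
  calc (UG ι).real {x | a < f ⬝ᵥ x} * (a ^ 2 * (Fintype.card ι + 1))
      = (Fintype.card ι + 1) * (a ^ 2 * (UG ι).real {x | a < f ⬝ᵥ x}) := by ring
    _ ≤ (Fintype.card ι + 1) * (a ^ 2 * (UG ι).real {x | a ^ 2 ≤ (f ⬝ᵥ x) ^ 2}) := by
      gcongr
    _ ≤ (Fintype.card ι + 1) * ∫ x, (f ⬝ᵥ x) ^ 2 ∂UG ι := by
      gcongr
      exact mul_meas_ge_le_integral_of_nonneg (ae_of_all _ fun x => sq_nonneg _)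
        (integrable_UG (by fun_prop)) _
    _ ≤ ‖f‖ ^ 2 := integral_sq_dotProduct_UG_le hf

end Simplex

section TotalVariation

variable {α : Type*} [MeasurableSpace α] {μ ν : Measure α}

lemma measureReal_sub_le_tvDist [IsFiniteMeasure μ] {A : Set α} (hA : MeasurableSet A) :
    μ.real A - ν.real A ≤ tvDist μ ν := by
  refine le_ciSup (f := fun A : {A : Set α // MeasurableSet A} => μ.real A - ν.real A)
    ⟨μ.real Set.univ, ?_⟩ ⟨A, hA⟩
  rintro _ ⟨B, rfl⟩
  exact (sub_le_self _ measureReal_nonneg).trans (measureReal_mono (Set.subset_univ _))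

lemma tvDist_nonneg [IsFiniteMeasure μ] : 0 ≤ tvDist μ ν := by
  simpa using measureReal_sub_le_tvDist (μ := μ) (ν := ν) MeasurableSet.empty

lemma integral_sub_le_tvDist [IsProbabilityMeasure μ] {F : α → ℝ} (hF : Measurable F)
    (hint : Integrable F μ) (hle : ∀ᵐ y ∂μ, F y ≤ 1) {a : ℝ} (ha : 0 ≤ a) :
    ∫ y, F y ∂μ - a - ν.real {y | a < F y} ≤ tvDist μ ν := by
  have hA : MeasurableSet {y | a < F y} := measurableSet_lt measurable_const hF
  have hind : Integrable ({y | a < F y}.indicator (1 : α → ℝ)) μ :=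
    (integrable_const 1).indicator hA
  have hmean : ∫ y, F y ∂μ ≤ a + μ.real {y | a < F y} :=
    calc ∫ y, F y ∂μ ≤ ∫ y, a + {y | a < F y}.indicator 1 y ∂μ := by
          refine integral_mono_ae hint ((integrable_const a).add hind) ?_
          filter_upwards [hle] with y hy
          by_cases hya : a < F y
          · simp only [Set.indicator_of_mem (s := {y | a < F y}) hya, Pi.one_apply]
            linarith
          · simp only [Set.indicator_of_notMem (s := {y | a < F y}) hya]
            linarith
      _ = a + μ.real {y | a < F y} := by
        rw [integral_add (integrable_const a) hind, integral_indicator_one hA, integral_const,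
          probReal_univ, one_smul]
  linarith [measureReal_sub_le_tvDist (μ := μ) (ν := ν) hA]

end TotalVariation

open scoped Matrix

section Rayleigh

lemma hasEigenvalue_sSup_inner_sphere {E : Type*} [NormedAddCommGroup E] [InnerProductSpace ℝ E]
    [FiniteDimensional ℝ E] [Nontrivial E] {T : E →ₗ[ℝ] E} (hT : T.IsSymmetric) :
    Module.End.HasEigenvalue T (sSup {c : ℝ | ∃ v, ‖v‖ = 1 ∧ c = inner ℝ (T v) v}) := by
  have hset : {c : ℝ | ∃ v, ‖v‖ = 1 ∧ c = inner ℝ (T v) v} =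
      Set.range fun v : {v : E // v ≠ 0} => inner ℝ (T v) (v : E) / ‖(v : E)‖ ^ 2 := by
    ext c
    constructor
    · rintro ⟨v, hv, rfl⟩
      exact ⟨⟨v, norm_ne_zero_iff.1 (by simp [hv])⟩, by simp [hv]⟩
    · rintro ⟨⟨v, hv⟩, rfl⟩
      refine ⟨‖v‖⁻¹ • v, norm_smul_inv_norm (𝕜 := ℝ) hv, ?_⟩
      simp only [map_smul, inner_smul_left, inner_smul_right, conj_trivial]
      ring
  rw [hset]
  exact hT.hasEigenvalue_iSup_of_finiteDimensional

lemma exists_eigenvector_sSup_inner_sphere {E : Type*} [NormedAddCommGroup E]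
    [InnerProductSpace ℝ E] {W : Submodule ℝ E} [FiniteDimensional ℝ W] [Nontrivial W]
    {T : E →ₗ[ℝ] E} (hT : T.IsSymmetric) (hinv : ∀ v ∈ W, T v ∈ W) :
    ∃ f ∈ W, f ≠ 0 ∧ T f = sSup {c : ℝ | ∃ v ∈ W, ‖v‖ = 1 ∧ c = inner ℝ (T v) v} • f := by
  obtain ⟨f, hf, hf0⟩ :=
    (hasEigenvalue_sSup_inner_sphere (hT.restrict_invariant hinv)).exists_hasEigenvector
  have hset : {c : ℝ | ∃ v ∈ W, ‖v‖ = 1 ∧ c = inner ℝ (T v) v} =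
      {c : ℝ | ∃ v : W, ‖v‖ = 1 ∧ c = inner ℝ (T.restrict hinv v) v} :=
    Set.ext fun c => ⟨fun ⟨v, hv, hc⟩ => ⟨⟨v, hv⟩, hc⟩, fun ⟨v, hc⟩ => ⟨v, v.2, hc⟩⟩
  refine ⟨f, f.2, fun h => hf0 (Subtype.ext h), ?_⟩
  rw [hset]
  exact congrArg Subtype.val (Module.End.mem_eigenspace_iff.1 hf)

variable {ι : Type*} [Fintype ι]

lemma exists_eigenvector_sSup_sumZero [Nontrivial ι] {A : Matrix ι ι ℝ} (hA : A.IsSymm)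
    (hsum : ∀ v, ∑ i, v i = 0 → ∑ i, (A *ᵥ v) i = 0) :
    ∃ f : ι → ℝ, f ≠ 0 ∧ ∑ i, f i = 0 ∧
      A *ᵥ f = sSup {c : ℝ | ∃ v : ι → ℝ, ∑ i, v i = 0 ∧ ∑ i, v i ^ 2 = 1 ∧
        c = v ⬝ᵥ A *ᵥ v} • f := by
  classical
  let W : Submodule ℝ (EuclideanSpace ℝ ι) :=
    (sumZero ι).comap (WithLp.linearEquiv 2 ℝ (ι → ℝ)).toLinearMap
  have hW (v : EuclideanSpace ℝ ι) : v ∈ W ↔ ∑ i, v i = 0 := mem_sumZero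
  have hsymm : (Matrix.toEuclideanLin A).IsSymmetric := by
    rw [Matrix.isSymmetric_toEuclideanLin_iff, Matrix.IsHermitian,
      Matrix.conjTranspose_eq_transpose_of_trivial]
    exact hA
  have : Nontrivial W := by
    obtain ⟨i, j, hij⟩ := exists_pair_ne ι
    refine ⟨⟨WithLp.toLp 2 (Pi.single i 1 - Pi.single j 1), (hW _).2 (by simp)⟩, 0, fun h => ?_⟩
    simpa [hij] using congrArg (fun v : W => (v : EuclideanSpace ℝ ι) i) h
  have hset : {c : ℝ | ∃ v : ι → ℝ, ∑ i, v i = 0 ∧ ∑ i, v i ^ 2 = 1 ∧ c = v ⬝ᵥ A *ᵥ v} =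
      {c : ℝ | ∃ v ∈ W, ‖v‖ = 1 ∧ c = inner ℝ (Matrix.toEuclideanLin A v) v} := by
    ext c
    constructor
    · rintro ⟨v, hv, hnorm, rfl⟩
      exact ⟨WithLp.toLp 2 v, (hW _).2 hv, by simp [EuclideanSpace.norm_eq, hnorm], rfl⟩
    · rintro ⟨v, hv, hnorm, rfl⟩
      exact ⟨v, (hW v).1 hv, by simpa [EuclideanSpace.norm_eq] using hnorm, rfl⟩
  obtain ⟨f, hfW, hf0, hf⟩ := exists_eigenvector_sSup_inner_sphere hsymm
    fun v hv => (hW _).2 (hsum _ ((hW v).1 hv))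
  refine ⟨f, fun h => hf0 (WithLp.ofLp_injective 2 h), (hW f).1 hfW, ?_⟩
  rw [hset]
  exact congrArg (fun v : EuclideanSpace ℝ ι => (v : ι → ℝ)) hf

end Rayleigh

section RandomWalk

variable {G} {R : Finset G}
omit [MeasurableSpace G] [DiscreteMeasurableSpace G]

lemma KhatM_mulVec (hid : (1 : G) ∉ R) (f : G → ℝ) (g : G) :
    (Matrix.of (KhatM G R) *ᵥ f) g = (1 - 2 / (Fintype.card G : ℝ)) * f g +
      2 / ((Fintype.card G : ℝ) * R.card) * ∑ r ∈ R, f (g * r) := by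
  have hentry (r : G) : KhatM G R g (g * r) * f (g * r) =
      (if r = 1 then (1 - 2 / (Fintype.card G : ℝ)) * f g else 0) +
        if r ∈ R then 2 / ((Fintype.card G : ℝ) * R.card) * f (g * r) else 0 := by
    rcases eq_or_ne r 1 with rfl | hr
    · simp [KhatM, hid]
    · simp [KhatM, hr]
  calc ∑ h, KhatM G R g h * f h
      = ∑ r, KhatM G R g (g * r) * f (g * r) :=
        (Equiv.sum_comp (Equiv.mulLeft g) fun h => KhatM G R g h * f h).symm
    _ = _ := by
      simp only [hentry, Finset.sum_add_distrib, Finset.sum_ite_eq', Finset.sum_ite_mem,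
        Finset.mem_univ, if_true, Finset.univ_inter, Finset.mul_sum]

lemma isSymm_KhatM (hsym : ∀ r ∈ R, r⁻¹ ∈ R) : (Matrix.of (KhatM G R)).IsSymm := by
  have hmem (g h : G) : h⁻¹ * g ∈ R ↔ g⁻¹ * h ∈ R :=
    ⟨fun hr => by simpa using hsym _ hr, fun hr => by simpa using hsym _ hr⟩
  ext g h
  simp only [Matrix.transpose_apply, Matrix.of_apply, KhatM, hmem, eq_comm]

omit [DecidableEq G] in
lemma sum_sum_mul_right (f : G → ℝ) : ∑ g, ∑ r ∈ R, f (g * r) = R.card * ∑ g, f g :=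
  calc ∑ g, ∑ r ∈ R, f (g * r) = ∑ r ∈ R, ∑ g, f (g * r) := Finset.sum_comm
    _ = ∑ _ ∈ R, ∑ g, f g :=
      Finset.sum_congr rfl fun r _ => Equiv.sum_comp (Equiv.mulRight r) f
    _ = R.card * ∑ g, f g := by rw [Finset.sum_const, nsmul_eq_mul]

lemma sum_KhatM_mulVec (hid : (1 : G) ∉ R) (hne : R.Nonempty) (f : G → ℝ) :
    ∑ g, (Matrix.of (KhatM G R) *ᵥ f) g = ∑ g, f g := by
  have hcard : (R.card : ℝ) ≠ 0 := Nat.cast_ne_zero.2 hne.card_ne_zero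
  simp only [KhatM_mulVec hid, Finset.sum_add_distrib, ← Finset.mul_sum, sum_sum_mul_right]
  field

lemma exists_gap_eigenfunction (hsym : ∀ r ∈ R, r⁻¹ ∈ R) (hid : (1 : G) ∉ R) (hne : R.Nonempty) :
    ∃ (f : G → ℝ) (z : G), ∑ g, f g = 0 ∧ ‖f‖ = 1 ∧ f z = 1 ∧
      Matrix.of (KhatM G R) *ᵥ f = (1 - gapHat G R) • f := by
  have : Nontrivial G :=
    let ⟨r, hr⟩ := hne
    ⟨r, 1, ne_of_mem_of_not_mem hr hid⟩
  obtain ⟨v, hv0, hvsum, hv⟩ := exists_eigenvector_sSup_sumZero (isSymm_KhatM hsym)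
    fun v hv => (sum_KhatM_mulVec hid hne v).trans hv
  have hgap : 1 - gapHat G R = sSup {c : ℝ | ∃ v : G → ℝ, ∑ g, v g = 0 ∧ ∑ g, v g ^ 2 = 1 ∧
      c = v ⬝ᵥ Matrix.of (KhatM G R) *ᵥ v} := by
    simp only [gapHat, sub_sub_cancel, dotProduct, Matrix.mulVec, Matrix.of_apply, Finset.mul_sum,
      mul_assoc]
  obtain ⟨z, hz : ‖v z‖ = ‖v‖⟩ := (IsGreatest.pi_norm v).1
  have hvz : v z ≠ 0 := norm_ne_zero_iff.1 (hz.trans_ne (norm_ne_zero_iff.2 hv0))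
  refine ⟨(v z)⁻¹ • v, z, ?_, ?_, inv_mul_cancel₀ hvz, ?_⟩
  · simp [← Finset.mul_sum, hvsum]
  · rw [norm_smul, norm_inv, hz, inv_mul_cancel₀ (norm_ne_zero_iff.2 hv0)]
  · rw [Matrix.mulVec_smul, hv, ← hgap, smul_comm]

lemma gapHat_mem_Icc (hsym : ∀ r ∈ R, r⁻¹ ∈ R) (hid : (1 : G) ∉ R) (hne : R.Nonempty) :
    gapHat G R ∈ Set.Icc 0 (4 / (Fintype.card G : ℝ)) := by
  obtain ⟨f, z, -, hnorm, hz, heig⟩ := exists_gap_eigenfunction hsym hid hne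
  have hcard : (0 : ℝ) < R.card := Nat.cast_pos.2 hne.card_pos
  have hS : |∑ r ∈ R, f (z * r)| ≤ R.card :=
    calc |∑ r ∈ R, f (z * r)| ≤ ∑ r ∈ R, |f (z * r)| := Finset.abs_sum_le_sum_abs _ _
      _ ≤ ∑ _ ∈ R, 1 := Finset.sum_le_sum fun r _ => hnorm ▸ norm_le_pi_norm f (z * r)
      _ = R.card := by simp
  have hgap : gapHat G R = 2 / Fintype.card G * (1 - (∑ r ∈ R, f (z * r)) / R.card) := by
    have := congrFun heig z
    rw [KhatM_mulVec hid, Pi.smul_apply, hz, smul_eq_mul] at this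
    linear_combination this
  have havg : |(∑ r ∈ R, f (z * r)) / R.card| ≤ 1 := by
    rwa [abs_div, abs_of_pos hcard, div_le_one hcard]
  rw [abs_le] at havg
  rw [hgap]
  constructor
  · exact mul_nonneg (by positivity) (by linarith)
  · calc 2 / Fintype.card G * (1 - (∑ r ∈ R, f (z * r)) / R.card)
        ≤ 2 / (Fintype.card G : ℝ) * 2 := by gcongr; linarith
      _ = 4 / Fintype.card G := by ring

lemma sum_sum_sub_mul_sub (hsym : ∀ r ∈ R, r⁻¹ ∈ R) (hid : (1 : G) ∉ R) (hne : R.Nonempty)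
    (f x : G → ℝ) :
    ∑ g, ∑ r ∈ R, (f g - f (g * r)) * (x g - x (g * r)) =
      Fintype.card G * R.card * (f ⬝ᵥ x - (Matrix.of (KhatM G R) *ᵥ f) ⬝ᵥ x) := by
  have hcard : (R.card : ℝ) ≠ 0 := Nat.cast_ne_zero.2 hne.card_ne_zero
  have hswap : ∑ g, ∑ r ∈ R, f g * x (g * r) = ∑ g, ∑ r ∈ R, f (g * r) * x g := by
    rw [Finset.sum_comm, Finset.sum_comm (s := Finset.univ)]
    refine Finset.sum_bij' (fun r _ => r⁻¹) (fun r _ => r⁻¹) hsym hsym (by simp) (by simp)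
      fun r _ => ?_
    exact Fintype.sum_equiv (Equiv.mulRight r) _ _ (by simp)
  have hK : (Matrix.of (KhatM G R) *ᵥ f) ⬝ᵥ x = (1 - 2 / Fintype.card G) * (f ⬝ᵥ x) +
      2 / (Fintype.card G * R.card) * ∑ g, ∑ r ∈ R, f (g * r) * x g := by
    simp only [dotProduct, KhatM_mulVec hid, add_mul, Finset.sum_add_distrib, Finset.mul_sum,
      Finset.sum_mul, mul_assoc]
  have hdiag : ∑ g, ∑ _ ∈ R, f g * x g = R.card * (f ⬝ᵥ x) := by
    simp [dotProduct, Finset.mul_sum]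
  have hexpand : ∑ g, ∑ r ∈ R, (f g - f (g * r)) * (x g - x (g * r)) =
      ∑ g, ∑ _ ∈ R, f g * x g + ∑ g, ∑ r ∈ R, f (g * r) * x (g * r) -
        (∑ g, ∑ r ∈ R, f g * x (g * r) + ∑ g, ∑ r ∈ R, f (g * r) * x g) := by
    simp only [← Finset.sum_add_distrib, ← Finset.sum_sub_distrib]
    exact Finset.sum_congr rfl fun g _ => Finset.sum_congr rfl fun r _ => by ring
  rw [hexpand, hswap, hdiag, hK, sum_sum_mul_right fun g => f g * x g, ← dotProduct]
  field

end RandomWalk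

section UnifOn

variable {α : Type*} [MeasurableSpace α] {s : Finset α}

lemma isProbabilityMeasure_unifOn (hs : s.Nonempty) : IsProbabilityMeasure (unifOn s) := by
  constructor
  simp [unifOn, Measure.finsetSum_apply, ENNReal.inv_mul_cancel, hs.ne_empty]

lemma ae_mem_unifOn [MeasurableSingletonClass α] : ∀ᵐ a ∂unifOn s, a ∈ s := by
  refine Measure.ae_smul_measure ?_ _
  simp [ae_iff, Measure.finsetSum_apply]

variable {β : Type*} [MeasurableSpace β] {ν : Measure β} [SFinite ν]

lemma unifOn_prod : (unifOn s).prod ν = (s.card : ENNReal)⁻¹ • ∑ a ∈ s, ν.map (Prod.mk a) := by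
  rw [unifOn, Measure.prod_smul_left, ← Measure.sum_coe_finset, Measure.prod_sum_left,
    ← Measure.sum_coe_finset]
  simp only [Measure.dirac_prod]

variable [MeasurableSingletonClass α] {φ : α × β → ℝ}

lemma integrable_unifOn_prod (hφ : ∀ a ∈ s, Integrable (fun b => φ (a, b)) ν) :
    Integrable φ ((unifOn s).prod ν) := by
  rcases s.eq_empty_or_nonempty with rfl | hs
  · simp [unifOn]
  rw [unifOn_prod]
  refine (integrable_finsetSum_measure.2 fun a ha => ?_).smul_measure (by simp [hs.ne_empty])
  exact (measurableEmbedding_prodMk_left a).integrable_map_iff.2 (hφ a ha)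

lemma integral_unifOn_prod (hφ : ∀ a ∈ s, Integrable (fun b => φ (a, b)) ν) :
    ∫ p, φ p ∂(unifOn s).prod ν = (s.card : ℝ)⁻¹ * ∑ a ∈ s, ∫ b, φ (a, b) ∂ν := by
  have hmap (a : α) := measurableEmbedding_prodMk_left (β := β) a
  rw [unifOn_prod, integral_smul_measure,
    integral_finsetSum_measure fun a ha => (hmap a).integrable_map_iff.2 (hφ a ha)]
  simp only [(hmap _).integral_map, ENNReal.toReal_inv, ENNReal.toReal_natCast, smul_eq_mul]

end UnifOn

section Drive

variable {α : Type*} [Fintype α] [MeasurableSpace α] {s : Finset α}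

lemma isProbabilityMeasure_driveG (hs : s.Nonempty) : IsProbabilityMeasure (driveG α s) := by
  have := isProbabilityMeasure_unifOn hs
  have := isProbabilityMeasure_unifOn (hs.mono s.subset_univ)
  have : IsProbabilityMeasure ((volume : Measure ℝ).restrict (Set.Icc 0 1)) := ⟨by simp⟩
  unfold driveG
  infer_instance

lemma ae_driveG [MeasurableSingletonClass α] (hs : s.Nonempty) :
    ∀ᵐ u ∂driveG α s, u.2.1 ∈ s ∧ u.2.2 ∈ Set.Icc (0 : ℝ) 1 := by
  have := isProbabilityMeasure_unifOn hs
  refine Measure.quasiMeasurePreserving_snd.ae (p := fun q : α × ℝ =>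
    q.1 ∈ s ∧ q.2 ∈ Set.Icc 0 1) ?_
  exact (Measure.quasiMeasurePreserving_fst.ae ae_mem_unifOn).and
    (Measure.quasiMeasurePreserving_snd.ae (ae_restrict_mem measurableSet_Icc))

lemma integral_driveG [MeasurableSingletonClass α] {φ : α × α × ℝ → ℝ}
    (hφ : ∀ g r, Continuous fun l => φ (g, r, l)) :
    ∫ u, φ u ∂driveG α s = (Fintype.card α : ℝ)⁻¹ *
      ∑ g, (s.card : ℝ)⁻¹ * ∑ r ∈ s, ∫ l in Set.Icc 0 1, φ (g, r, l) := by
  have hint (g r : α) : Integrable (fun l => φ (g, r, l)) (volume.restrict (Set.Icc 0 1)) :=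
    (hφ g r).integrableOn_Icc
  rw [driveG, integral_unifOn_prod fun g _ => integrable_unifOn_prod fun r _ => hint g r,
    Finset.card_univ]
  exact congrArg _ (Finset.sum_congr rfl fun g _ => integral_unifOn_prod fun r _ => hint g r)

end Drive

section GibbsStep

variable {G}

omit [MeasurableSpace G] [DiscreteMeasurableSpace G]

omit [Fintype G] in
lemma gibbsStepG_eq_add_smul {r : G} (hr : r ≠ 1) (x : G → ℝ) (g : G) (l : ℝ) :
    gibbsStepG G x (g, r, l) =
      x + (l * (x g + x (g * r)) - x g) • (Pi.single g 1 - Pi.single (g * r) 1) := by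
  have hgr : g * r ≠ g := by simpa using hr
  ext h
  rcases eq_or_ne h g with rfl | hg
  · simp [gibbsStepG, hgr.symm]
  rcases eq_or_ne h (g * r) with rfl | hh
  · simp only [gibbsStepG, hgr, if_false, if_true, Pi.add_apply, Pi.smul_apply, Pi.sub_apply,
      Pi.single_eq_of_ne hgr, Pi.single_eq_same, smul_eq_mul]
    ring
  · simp [gibbsStepG, hg, hh]

lemma dotProduct_gibbsStepG {r : G} (hr : r ≠ 1) (f x : G → ℝ) (g : G) (l : ℝ) :
    f ⬝ᵥ gibbsStepG G x (g, r, l) =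
      f ⬝ᵥ x + (l * (x g + x (g * r)) - x g) * (f g - f (g * r)) := by
  simp [gibbsStepG_eq_add_smul hr, dotProduct_add, dotProduct_smul, dotProduct_sub]

lemma gibbsStepG_mem_simplexG {x : G → ℝ} (hx : x ∈ simplexG G) {u : G × G × ℝ}
    (hr : u.2.1 ≠ 1) (hl : u.2.2 ∈ Set.Icc (0 : ℝ) 1) : gibbsStepG G x u ∈ simplexG G := by
  constructor
  · intro h
    have hpair : 0 ≤ x u.1 + x (u.1 * u.2.1) := add_nonneg (hx.1 _) (hx.1 _)
    unfold gibbsStepG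
    split_ifs
    · exact mul_nonneg hl.1 hpair
    · exact mul_nonneg (sub_nonneg.2 hl.2) hpair
    · exact hx.1 h
  · rw [← one_dotProduct, dotProduct_gibbsStepG hr]
    simp [one_dotProduct, hx.2]

omit [Fintype G] in
lemma continuous_gibbsStepG (g r : G) :
    Continuous fun p : (G → ℝ) × ℝ => gibbsStepG G p.1 (g, r, p.2) := by
  refine continuous_pi fun h => ?_
  unfold gibbsStepG
  dsimp only
  split_ifs <;> fun_prop

lemma integral_dotProduct_gibbsStepG_Icc {r : G} (hr : r ≠ 1) (f x : G → ℝ) (g : G) :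
    ∫ l in Set.Icc 0 1, f ⬝ᵥ gibbsStepG G x (g, r, l) =
      f ⬝ᵥ x - (f g - f (g * r)) * (x g - x (g * r)) / 2 := by
  have hint : ∫ l in (0 : ℝ)..1, (l * (x g + x (g * r)) - x g) = (x (g * r) - x g) / 2 := by
    rw [intervalIntegral.integral_sub (by simp) (by simp), intervalIntegral.integral_mul_const,
      integral_id, intervalIntegral.integral_const, smul_eq_mul]
    ring
  simp only [dotProduct_gibbsStepG hr]
  rw [integral_Icc_eq_integral_Ioc, ← intervalIntegral.integral_of_le zero_le_one,
    intervalIntegral.integral_add (by simp) (by apply Continuous.intervalIntegrable; fun_prop),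
    intervalIntegral.integral_mul_const, hint, intervalIntegral.integral_const, smul_eq_mul]
  ring

end GibbsStep

section OneStep

variable {G} {R : Finset G}

omit [Fintype G] in
lemma measurable_gibbsStepG [Countable G] :
    Measurable fun p : (G → ℝ) × G × G × ℝ => gibbsStepG G p.1 p.2 := by
  have hslice : Measurable fun q : (G × G) × (G → ℝ) × ℝ =>
      gibbsStepG G q.2.1 (q.1.1, q.1.2, q.2.2) :=
    measurable_from_prod_countable_right fun a => (continuous_gibbsStepG a.1 a.2).measurable
  have hassoc : Measurable fun p : (G → ℝ) × G × G × ℝ =>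
      ((p.2.1, p.2.2.1), (p.1, p.2.2.2)) := by fun_prop
  exact hslice.comp hassoc

lemma integral_dotProduct_gibbsStepG (hsym : ∀ r ∈ R, r⁻¹ ∈ R) (hid : (1 : G) ∉ R)
    (hne : R.Nonempty) (f x : G → ℝ) :
    ∫ u, f ⬝ᵥ gibbsStepG G x u ∂driveG G R =
      (f ⬝ᵥ x + (Matrix.of (KhatM G R) *ᵥ f) ⬝ᵥ x) / 2 := by
  have hcard : (R.card : ℝ) ≠ 0 := Nat.cast_ne_zero.2 hne.card_ne_zero
  have hcont (g r : G) : Continuous fun l => f ⬝ᵥ gibbsStepG G x (g, r, l) :=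
    continuous_const.dotProduct
      ((continuous_gibbsStepG g r).comp (continuous_const.prodMk continuous_id))
  have hsum : ∑ g, ∑ r ∈ R, ∫ l in Set.Icc 0 1, f ⬝ᵥ gibbsStepG G x (g, r, l) =
      Fintype.card G * R.card * (f ⬝ᵥ x) -
        (∑ g, ∑ r ∈ R, (f g - f (g * r)) * (x g - x (g * r))) / 2 := by
    simp only [Finset.sum_div]
    rw [Finset.sum_congr rfl fun g _ => Finset.sum_congr rfl fun r hr =>
      integral_dotProduct_gibbsStepG_Icc (ne_of_mem_of_not_mem hr hid) f x g]
    simp [Finset.sum_sub_distrib, mul_assoc]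
  rw [integral_driveG hcont, ← Finset.mul_sum, hsum, sum_sum_sub_mul_sub hsym hid hne]
  field

end OneStep

section Law

variable {G} {R : Finset G}

omit [Fintype G] in
lemma measurable_foldl_gibbsStepG [Countable G] (x : G → ℝ) (T : ℕ) :
    Measurable fun ω : Fin T → G × G × ℝ => (List.ofFn ω).foldl (gibbsStepG G) x := by
  induction T with
  | zero => simp
  | succ T ih =>
    simp only [List.ofFn_succ', List.concat_eq_append, List.foldl_append, List.foldl_cons,
      List.foldl_nil]
    have hinit : Measurable fun ω : Fin (T + 1) → G × G × ℝ => fun i : Fin T => ω i.castSucc := by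
      fun_prop
    exact measurable_gibbsStepG.comp ((ih.comp hinit).prodMk (measurable_pi_apply (Fin.last T)))

omit [DiscreteMeasurableSpace G] in
lemma lawG_zero (x : G → ℝ) : lawG G R x 0 = Measure.dirac x := by
  simp [lawG]

lemma isProbabilityMeasure_lawG (hne : R.Nonempty) (x : G → ℝ) (T : ℕ) :
    IsProbabilityMeasure (lawG G R x T) := by
  have := isProbabilityMeasure_driveG hne
  exact Measure.isProbabilityMeasure_map (measurable_foldl_gibbsStepG x T).aemeasurable

lemma lawG_succ (hne : R.Nonempty) (x : G → ℝ) (T : ℕ) :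
    lawG G R x (T + 1) =
      ((lawG G R x T).prod (driveG G R)).map fun p => gibbsStepG G p.1 p.2 := by
  have := isProbabilityMeasure_driveG hne
  have htraj := measurable_foldl_gibbsStepG x T
  have hsplit := measurePreserving_piFinSuccAbove (fun _ : Fin (T + 1) => driveG G R) (Fin.last T)
  have hprod : (lawG G R x T).prod (driveG G R) = (Measure.pi fun _ => driveG G R).map
      (Prod.map (fun ω : Fin T → G × G × ℝ => (List.ofFn ω).foldl (gibbsStepG G) x) id ∘
        Prod.swap ∘ MeasurableEquiv.piFinSuccAbove _ (Fin.last T)) := by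
    rw [← Measure.map_map (htraj.prodMap measurable_id) (by fun_prop),
      ← Measure.map_map measurable_swap (by fun_prop), hsplit.map_eq, Measure.prod_swap,
      ← Measure.map_prod_map _ _ htraj measurable_id, Measure.map_id, lawG]
  rw [hprod, Measure.map_map measurable_gibbsStepG (by fun_prop), lawG]
  congr 1
  ext ω : 1
  simp [-List.ofFn_succ, List.ofFn_succ', MeasurableEquiv.piFinSuccAbove, Fin.init_def]

lemma ae_mem_simplexG_lawG (hid : (1 : G) ∉ R) (hne : R.Nonempty) {x : G → ℝ}
    (hx : x ∈ simplexG G) (T : ℕ) : ∀ᵐ y ∂lawG G R x T, y ∈ simplexG G := by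
  have := isProbabilityMeasure_driveG hne
  induction T with
  | zero => simpa [lawG_zero, ae_dirac_iff measurableSet_simplexG] using hx
  | succ T ih =>
    have := isProbabilityMeasure_lawG hne x T
    rw [lawG_succ hne]
    refine (ae_map_iff measurable_gibbsStepG.aemeasurable measurableSet_simplexG).2 ?_
    filter_upwards [Measure.quasiMeasurePreserving_fst.ae ih,
      Measure.quasiMeasurePreserving_snd.ae (ae_driveG hne)] with p hp hu
    exact gibbsStepG_mem_simplexG hp (ne_of_mem_of_not_mem hu.1 hid) hu.2

lemma integrable_dotProduct_lawG (hid : (1 : G) ∉ R) (hne : R.Nonempty) {x : G → ℝ}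
    (hx : x ∈ simplexG G) (T : ℕ) (f : G → ℝ) : Integrable (fun y => f ⬝ᵥ y) (lawG G R x T) := by
  have := isProbabilityMeasure_lawG hne x T
  exact integrable_of_continuous_of_ae_mem_isCompact (isCompact_stdSimplex ℝ G)
    (ae_mem_simplexG_lawG hid hne hx T) (by fun_prop)

lemma integral_dotProduct_lawG (hsym : ∀ r ∈ R, r⁻¹ ∈ R) (hid : (1 : G) ∉ R) (hne : R.Nonempty)
    {f : G → ℝ} {c : ℝ} (heig : Matrix.of (KhatM G R) *ᵥ f = c • f) {x : G → ℝ}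
    (hx : x ∈ simplexG G) (T : ℕ) :
    ∫ y, f ⬝ᵥ y ∂lawG G R x T = ((1 + c) / 2) ^ T * (f ⬝ᵥ x) := by
  have := isProbabilityMeasure_driveG hne
  induction T with
  | zero => simp [lawG_zero]
  | succ T ih =>
    have := isProbabilityMeasure_lawG hne x T
    have hint := integrable_dotProduct_lawG hid hne hx (T + 1) f
    rw [lawG_succ hne] at hint ⊢
    calc ∫ y, f ⬝ᵥ y ∂((lawG G R x T).prod (driveG G R)).map (fun p => gibbsStepG G p.1 p.2)
        = ∫ p, f ⬝ᵥ gibbsStepG G p.1 p.2 ∂(lawG G R x T).prod (driveG G R) :=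
          integral_map measurable_gibbsStepG.aemeasurable hint.1
      _ = ∫ y, ∫ u, f ⬝ᵥ gibbsStepG G y u ∂driveG G R ∂lawG G R x T :=
          integral_prod _ (hint.comp_measurable measurable_gibbsStepG)
      _ = ∫ y, (1 + c) / 2 * (f ⬝ᵥ y) ∂lawG G R x T := by
          congr 1
          ext y
          rw [integral_dotProduct_gibbsStepG hsym hid hne, heig, smul_dotProduct, smul_eq_mul]
          ring
      _ = ((1 + c) / 2) ^ (T + 1) * (f ⬝ᵥ x) := by
          rw [integral_const_mul, ih]
          ring

end Law

lemma exp_neg_mul_le_one_sub_half_pow {t : ℝ} (ht0 : 0 ≤ t) (ht1 : t ≤ 1) (T : ℕ) :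
    Real.exp (-(t * T)) ≤ (1 - t / 2) ^ T := by
  have hstep : Real.exp (-t) ≤ 1 - t / 2 := by
    have hexp := Real.add_one_le_exp t
    rw [Real.exp_neg, inv_le_comm₀ (Real.exp_pos t) (by linarith),
      inv_le_iff_one_le_mul₀ (by linarith)]
    nlinarith
  calc Real.exp (-(t * T)) = Real.exp (-t) ^ T := by
        rw [← Real.exp_nat_mul]
        ring_nf
    _ ≤ (1 - t / 2) ^ T := pow_le_pow_left₀ (Real.exp_pos _).le hstep T

section LowerBound

variable {G} {R : Finset G}

lemma exists_forall_pow_sub_le_tvDist (hsym : ∀ r ∈ R, r⁻¹ ∈ R) (hid : (1 : G) ∉ R)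
    (hne : R.Nonempty) :
    ∃ x ∈ simplexG G, ∀ (T : ℕ) {a : ℝ}, 0 < a →
      (1 - gapHat G R / 2) ^ T - a - (a ^ 2 * (Fintype.card G + 1))⁻¹ ≤
        tvDist (lawG G R x T) (UG G) := by
  obtain ⟨f, z, hsum, hnorm, hz, heig⟩ := exists_gap_eigenfunction hsym hid hne
  have hx : Pi.single z 1 ∈ simplexG G := single_mem_stdSimplex ℝ z
  refine ⟨Pi.single z 1, hx, fun T a ha => ?_⟩
  have := isProbabilityMeasure_lawG hne (Pi.single z 1) T
  have hle : ∀ᵐ y ∂lawG G R (Pi.single z 1) T, f ⬝ᵥ y ≤ 1 :=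
    (ae_mem_simplexG_lawG hid hne hx T).mono fun y hy =>
      hnorm ▸ (le_abs_self _).trans (abs_dotProduct_le_norm hy f)
  have hmean : ∫ y, f ⬝ᵥ y ∂lawG G R (Pi.single z 1) T = (1 - gapHat G R / 2) ^ T := by
    rw [integral_dotProduct_lawG hsym hid hne heig hx, dotProduct_single, hz]
    ring
  have htail : (UG G).real {y | a < f ⬝ᵥ y} ≤ (a ^ 2 * (Fintype.card G + 1))⁻¹ := by
    simpa [hnorm] using measureReal_UG_dotProduct_gt_le hsum ha
  have htv := integral_sub_le_tvDist (ν := UG G) (F := fun y => f ⬝ᵥ y) (by fun_prop)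
    (integrable_dotProduct_lawG hid hne hx T f) hle ha.le
  rw [hmean] at htv
  linarith

end LowerBound

theorem gibbs_sampler_cayley_lower_bound_general
    (R : Finset G) (hsym : ∀ r ∈ R, r⁻¹ ∈ R) (hid : (1 : G) ∉ R) (hne : R.Nonempty) :
    ∃ x ∈ simplexG G, ∀ T : ℕ,
      Real.exp (-(gapHat G R * T)) - 2 * (Fintype.card G : ℝ) ^ (-(1 : ℝ) / 3) ≤
        tvDist (lawG G R x T) (UG G) := by
  obtain ⟨x, hx, hbound⟩ := exists_forall_pow_sub_le_tvDist hsym hid hne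
  refine ⟨x, hx, fun T => ?_⟩
  obtain ⟨hgap0, hgap4⟩ := gapHat_mem_Icc hsym hid hne
  have hn : (0 : ℝ) < Fintype.card G := Nat.cast_pos.2 Fintype.card_pos
  set a : ℝ := (Fintype.card G : ℝ) ^ (-(1 : ℝ) / 3) with ha_def
  have ha : 0 < a := Real.rpow_pos_of_pos hn _
  have ha3 : a ^ 3 = (Fintype.card G : ℝ)⁻¹ := by
    rw [ha_def, ← Real.rpow_mul_natCast hn.le, ← Real.rpow_neg_one]
    norm_num
  rcases le_or_gt (1 / 2) a with hlarge | hsmall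
  · have := isProbabilityMeasure_lawG hne x T
    have hexp : Real.exp (-(gapHat G R * T)) ≤ 1 :=
      Real.exp_le_one_iff.2 (neg_nonpos.2 (mul_nonneg hgap0 T.cast_nonneg))
    linarith [tvDist_nonneg (μ := lawG G R x T) (ν := UG G)]
  · have hgap1 : gapHat G R ≤ 1 :=
      calc gapHat G R ≤ 4 * a ^ 3 := by rwa [ha3, ← div_eq_mul_inv]
        _ ≤ 4 * (1 / 2) ^ 3 := by gcongr
        _ ≤ 1 := by norm_num
    have hdecay := exp_neg_mul_le_one_sub_half_pow hgap0 hgap1 T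
    have htail : (a ^ 2 * (Fintype.card G + 1))⁻¹ ≤ a :=
      calc (a ^ 2 * (Fintype.card G + 1))⁻¹ ≤ (a ^ 2 * Fintype.card G)⁻¹ := by
            gcongr
            linarith
        _ = a := by
            rw [mul_inv, ← ha3]
            field
    linarith [hbound T ha]

/-- Lower bound on the mixing time of the Gibbs sampler on the simplex with geometry. -/
theorem gibbs_sampler_cayley_lower_bound
    (R : Finset G) (hsym : ∀ r ∈ R, r⁻¹ ∈ R) (hid : (1 : G) ∉ R) (hne : R.Nonempty)
    (hgen : Subgroup.closure (R : Set G) = ⊤)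
    (k : ℝ) (hk : 0 < k) (T : ℕ) (hT : (T : ℝ) < k / gapHat G R) :
    ∃ x ∈ simplexG G,
      1 / 2 * Real.exp (-k) - 4 * (Fintype.card G : ℝ) ^ (-(1 : ℝ) / 3) ≤
        tvDist (lawG G R x T) (UG G) := by
  obtain ⟨x, hx, hbound⟩ := gibbs_sampler_cayley_lower_bound_general G R hsym hid hne
  have hgap : 0 < gapHat G R := (div_pos_iff_of_pos_left hk).1 (T.cast_nonneg.trans_lt hT)
  have hexp : Real.exp (-k) ≤ Real.exp (-(gapHat G R * T)) :=
    Real.exp_le_exp.2 (neg_le_neg ((lt_div_iff₀' hgap).1 hT).le)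
  have hpow : 0 ≤ (Fintype.card G : ℝ) ^ (-(1 : ℝ) / 3) := by positivity
  exact ⟨x, hx, by linarith [hbound T, Real.exp_pos (-k)]⟩

end
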